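/- Let ℓ be an odd prime and let G be a subgroup of GL₂(F_ℓ) such that every element of G lies in a conjugate of N_sp, some element of G is not diagonalizable over F_ℓ, and the determinant map G → F_ℓˣ is surjective. Then either G is contained in a conjugate of N_sp, or the image H of G in PGL₂(F_ℓ) is isomorphic to S₄ and ℓ ≡ 13 (mod 24). -/

import Mathlib

open Matrix

abbrev GL2 (ℓ : ℕ) : Type := GL (Fin 2) (ZMod ℓ)

/-- The underlying matrix of an element of `GL₂(F_ℓ)`. -/
def mat {ℓ : ℕ} (g : GL2 ℓ) : Matrix (Fin 2) (Fin 2) (ZMod ℓ) := g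

/-- `g` is a diagonal matrix. -/
def IsDiag {ℓ : ℕ} (g : GL2 ℓ) : Prop := mat g 0 1 = 0 ∧ mat g 1 0 = 0

/-- `g` is an antidiagonal matrix. -/
def IsAnti {ℓ : ℕ} (g : GL2 ℓ) : Prop := mat g 0 0 = 0 ∧ mat g 1 1 = 0

/-- `g` is a scalar matrix. -/
def IsScalar {ℓ : ℕ} (g : GL2 ℓ) : Prop :=
  ∃ c : ZMod ℓ, mat g = c • (1 : Matrix (Fin 2) (Fin 2) (ZMod ℓ))

/-- Membership in the split Cartan subgroup `C_sp` (the diagonal matrices). -/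
def InCsp {ℓ : ℕ} (g : GL2 ℓ) : Prop := IsDiag g

/-- Membership in the normalizer `N_sp` of the split Cartan (diagonal or antidiagonal). -/
def InNsp {ℓ : ℕ} (g : GL2 ℓ) : Prop := IsDiag g ∨ IsAnti g

/-- Membership in the nonsplit Cartan `C_ns` w.r.t. the nonresidue `δ`:
matrices of the form `[[a, δb], [b, a]]`. -/
def InCns {ℓ : ℕ} (δ : ZMod ℓ) (g : GL2 ℓ) : Prop :=
  mat g 1 1 = mat g 0 0 ∧ mat g 0 1 = δ * mat g 1 0

/-- Membership in `N_ns \ C_ns` (as a matrix shape): `[[a, -δb], [b, -a]]`. -/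
def InNnsAnti {ℓ : ℕ} (δ : ZMod ℓ) (g : GL2 ℓ) : Prop :=
  mat g 1 1 = - mat g 0 0 ∧ mat g 0 1 = - (δ * mat g 1 0)

/-- Membership in the normalizer `N_ns` of the nonsplit Cartan. -/
def InNns {ℓ : ℕ} (δ : ZMod ℓ) (g : GL2 ℓ) : Prop := InCns δ g ∨ InNnsAnti δ g

/-- `PGL₂(F_ℓ)`: the quotient of `GL₂(F_ℓ)` by its center (the scalar matrices). -/
abbrev PGL2 (ℓ : ℕ) : Type := GL2 ℓ ⧸ Subgroup.center (GL2 ℓ)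

/-- The natural projection `GL₂(F_ℓ) →* PGL₂(F_ℓ)`. -/
def toPGL (ℓ : ℕ) : GL2 ℓ →* PGL2 ℓ := QuotientGroup.mk' _

/-- The image of a subgroup of `GL₂(F_ℓ)` in `PGL₂(F_ℓ)`. -/
def projImage {ℓ : ℕ} (G : Subgroup (GL2 ℓ)) : Subgroup (PGL2 ℓ) := G.map (toPGL ℓ)

/-- `H` is isomorphic to the alternating group `A₄`. -/
def IsA4 {ℓ : ℕ} (H : Subgroup (PGL2 ℓ)) : Prop := Nonempty (H ≃* alternatingGroup (Fin 4))

/-- `H` is isomorphic to the symmetric group `S₄`. -/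
def IsS4 {ℓ : ℕ} (H : Subgroup (PGL2 ℓ)) : Prop := Nonempty (H ≃* Equiv.Perm (Fin 4))

/-- `H` is isomorphic to the alternating group `A₅`. -/
def IsA5 {ℓ : ℕ} (H : Subgroup (PGL2 ℓ)) : Prop := Nonempty (H ≃* alternatingGroup (Fin 5))


section AbstractCount

open MulAction Finset

variable {H X : Type*} [Group H] [Fintype H] [Fintype X] [MulAction H X]

/-- There is an invariant pair of points. -/
def HasInvPair (H X : Type*) [Group H] [MulAction H X] : Prop :=
  ∃ P Q : X, P ≠ Q ∧ ∀ h : H, (h • P = P ∧ h • Q = Q) ∨ (h • P = Q ∧ h • Q = P)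

lemma hasInvPair_of_finset (S : Finset X) (hS : S.card = 2)
    (hinv : ∀ h : H, ∀ x ∈ S, h • x ∈ S) : HasInvPair H X := by
  classical
  obtain ⟨P, Q, hPQ, rfl⟩ := Finset.card_eq_two.1 hS
  refine ⟨P, Q, hPQ, fun h => ?_⟩
  have h1 := hinv h P (by simp)
  have h2 := hinv h Q (by simp)
  have h3 : h • P ≠ h • Q := fun h' => hPQ (smul_left_cancel h h')
  simp only [Finset.mem_insert, Finset.mem_singleton] at h1 h2
  grind

open Classical in
/-- Double count of fixed points for a subgroup. -/
lemma double_count (hfix : ∀ h : H, h ≠ 1 → (univ.filter fun x : X => h • x = x).card = 2)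
    (K : Subgroup H) :
    ∑ x : X, (((univ.filter fun h : H => h ∈ K ∧ h • x = x).card : ℤ) - 1) =
      2 * ((univ.filter fun h : H => h ∈ K).card - 1) := by
  have h1 : ∀ x : X, ((univ.filter fun h : H => h ∈ K ∧ h • x = x).card : ℤ) - 1 =
      ∑ h ∈ (univ.filter fun h : H => h ∈ K).erase 1, if h • x = x then (1 : ℤ) else 0 := by
    intro x
    have : (univ.filter fun h : H => h ∈ K ∧ h • x = x) =
      insert 1 (((univ.filter fun h : H => h ∈ K).erase 1).filter fun h => h • x = x) := by
      ext h
      by_cases hh : h = 1 <;> simp [hh, K.one_mem]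
    rw [this, Finset.card_insert_of_notMem (by simp), Finset.sum_boole]
    push_cast; ring
  rw [Finset.sum_congr rfl (fun x _ => h1 x), Finset.sum_comm]
  have h2 : ∀ h ∈ (univ.filter fun h : H => h ∈ K).erase 1,
      ∑ x : X, (if h • x = x then (1 : ℤ) else 0) = 2 := by
    intro h hh
    rw [Finset.sum_boole, hfix h (Finset.ne_of_mem_erase hh)]; rfl
  rw [Finset.sum_congr rfl h2, Finset.sum_const, Finset.card_erase_of_mem (by simp [K.one_mem])]
  have : 0 < (univ.filter fun h : H => h ∈ K).card := Finset.card_pos.2 ⟨1, by simp [K.one_mem]⟩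
  rw [nsmul_eq_mul, Nat.cast_sub this]
  push_cast; ring

open Classical in
/-- stabilizer order -/
noncomputable def stb (H : Type*) {X : Type*} [Group H] [Fintype H] [MulAction H X] (x : X) : ℕ :=
  (univ.filter fun h : H => h • x = x).card

open Classical in
/-- orbit as a finset -/
noncomputable def orb (H : Type*) {X : Type*} [Group H] [Fintype X] [MulAction H X] (x : X) :
    Finset X := univ.filter fun y => y ∈ orbit H x

lemma stb_eq (x : X) : stb H x = Nat.card (stabilizer H x) := by
  classical
  rw [stb, Nat.card_eq_fintype_card, Fintype.card_subtype]
  simp [mem_stabilizer_iff]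

lemma orb_mul_stb (x : X) : (orb H x).card * stb H x = Fintype.card H := by
  classical
  rw [stb_eq, orb, ← Fintype.card_subtype, Nat.card_eq_fintype_card,
    ← card_orbit_mul_card_stabilizer_eq_card_group H x]

lemma stb_smul (h : H) (x : X) : stb H (h • x) = stb H x := by
  rw [stb_eq, stb_eq]
  exact Nat.card_congr (stabilizerEquivStabilizer (G := H) (g := h) rfl).toEquiv.symm

lemma stb_pos (x : X) : 0 < stb H x := by
  classical
  exact Finset.card_pos.2 ⟨1, by simp⟩

lemma mem_orb {x y : X} : y ∈ orb H x ↔ ∃ h : H, h • x = y := by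
  simp [orb, mem_orbit_iff]

lemma stb_of_mem_orb {x y : X} (h : y ∈ orb H x) : stb H y = stb H x := by
  obtain ⟨a, rfl⟩ := mem_orb.1 h
  exact stb_smul a x

lemma orb_disjoint {x y : X} (h : y ∉ orb H x) : Disjoint (orb H x) (orb H y) := by
  rw [Finset.disjoint_left]
  intro z hz hz'
  obtain ⟨a, rfl⟩ := mem_orb.1 hz
  obtain ⟨b, hb⟩ := mem_orb.1 hz'
  exact h (mem_orb.2 ⟨b⁻¹ * a, by rw [mul_smul, ← hb, inv_smul_smul]⟩)

lemma orb_sum (x : X) : ∑ y ∈ orb H x, ((stb H y : ℤ) - 1) = Fintype.card H - (orb H x).card := by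
  rw [Finset.sum_congr rfl (fun y hy => by rw [stb_of_mem_orb hy]), Finset.sum_const,
    ← orb_mul_stb (H := H) x]
  simp; ring

open Classical in
lemma total_sum
    (hfix : ∀ h : H, h ≠ 1 → (univ.filter fun x : X => h • x = x).card = 2) :
    ∑ x : X, ((stb H x : ℤ) - 1) = 2 * (Fintype.card H - 1) := by
  have := double_count (H := H) (X := X) (by convert hfix) ⊤
  simp only [Subgroup.mem_top, true_and] at this
  simpa [stb] using this

/-- arithmetic -/
lemma arith (n e1 e2 e3 o1 o2 o3 : ℕ) (h1 : o1 * e1 = n) (h2 : o2 * e2 = n) (h3 : o3 * e3 = n)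
    (he1 : 2 ≤ e1) (h12 : e1 ≤ e2) (h23 : e2 ≤ e3) (ho : o1 + o2 + o3 = n + 2) :
    o3 = 2 ∨ n = 24 ∨ (n = 12 ∧ e2 = 3 ∧ e3 = 3) ∨ (n = 60 ∧ e2 = 3 ∧ e3 = 5) := by
  have p2 : o2 ≤ o1 := by
    by_contra! hc
    have : o1 * e1 < o2 * e2 := by nlinarith
    omega
  have p3 : o3 ≤ o2 := by
    by_contra! hc
    have : o2 * e2 < o3 * e3 := by nlinarith
    omega
  have q1 : e1 < 3 := by
    by_contra! hc
    nlinarith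
  obtain rfl : e1 = 2 := by omega
  have q2 : e2 < 4 := by
    by_contra! hc
    nlinarith
  interval_cases e2
  · left; omega
  · have q3 : e3 < 6 := by
      by_contra! hc
      nlinarith
    interval_cases e3 <;> omega


open Classical in
lemma hasInvPair_of_normal_prime
    (hfix : ∀ h : H, h ≠ 1 → (univ.filter fun x : X => h • x = x).card = 2)
    (M : Subgroup H) [M.Normal] (p : ℕ) [Fact p.Prime] (hM : Nat.card M = p) :
    HasInvPair H X := by
  have hne : M ≠ ⊥ := by
    rintro rfl
    simp at hM
    exact (Fact.out : p.Prime).one_lt.ne hM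
  obtain ⟨m, hm, hm1⟩ := M.ne_bot_iff_exists_ne_one.1 hne |>.imp fun a ha => (⟨a.2, ha⟩ : _ ∧ _)
  have hgen : ∀ k ∈ M, ∃ i : ℤ, (m : H) ^ i = k := by
    intro k hk
    have := mem_zpowers_of_prime_card (g := m) (g' := ⟨k, hk⟩) hM hm1
    obtain ⟨i, hi⟩ := Subgroup.mem_zpowers_iff.1 this
    exact ⟨i, by simpa using congrArg Subtype.val hi⟩
  refine hasInvPair_of_finset _ (hfix m (by simpa using hm1)) ?_
  intro h x hx
  simp only [Finset.mem_filter, Finset.mem_univ, true_and] at hx ⊢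
  have hc : h⁻¹ * m * h ∈ M := by
    simpa using (inferInstance : M.Normal).conj_mem m hm h⁻¹
  obtain ⟨i, hi⟩ := hgen _ hc
  have hxi : ((m : H) ^ i) • x = x := by
    have : (m : H) ∈ stabilizer H x := hx
    exact (stabilizer H x).zpow_mem this i
  rw [hi] at hxi
  have := congrArg (h • ·) hxi
  simpa [smul_smul, mul_assoc] using this

open Classical in
lemma case_24
    (hfix : ∀ h : H, h ≠ 1 → (univ.filter fun x : X => h • x = x).card = 2)
    (hn : Fintype.card H = 24) : HasInvPair H X ∨ Nonempty (H ≃* Equiv.Perm (Fin 4)) := by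
  have hn' : Nat.card H = 24 := by rw [Nat.card_eq_fintype_card, hn]
  have : Fact (Nat.Prime 3) := ⟨by norm_num⟩
  have : Fact (Nat.Prime 2) := ⟨by norm_num⟩
  obtain ⟨Q⟩ : Nonempty (Sylow 3 H) := inferInstance
  have hQ : Nat.card Q = 3 := by
    have := Q.card_eq_multiplicity
    rw [this, hn']
    have : Nat.factorization 24 3 = 1 := by
      rw [show (24 : ℕ) = 3 * 8 by norm_num, Nat.factorization_mul (by norm_num) (by norm_num)]
      simp [Nat.prime_three.factorization, Nat.factorization_eq_zero_of_not_dvd (show ¬ 3 ∣ 8 by norm_num)]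
    rw [this]; norm_num
  have hidx : (Q : Subgroup H).index = 8 := by
    have := (Q : Subgroup H).index_mul_card
    have hQ' : Nat.card (Q : Subgroup H) = 3 := hQ
    rw [hQ', hn'] at this; omega
  have hdvd : Nat.card (Sylow 3 H) ∣ 8 := hidx ▸ Q.card_dvd_index
  have hmod : Nat.card (Sylow 3 H) % 3 = 1 := card_sylow_modEq_one 3 H
  have hc : Nat.card (Sylow 3 H) = 1 ∨ Nat.card (Sylow 3 H) = 4 := by
    have := Nat.le_of_dvd (by norm_num) hdvd
    interval_cases Nat.card (Sylow 3 H) <;> omega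
  rcases hc with hc | hc
  · left
    have : Subsingleton (Sylow 3 H) := (Nat.card_eq_one_iff_unique.1 hc).1
    have := Q.normal_of_subsingleton
    exact hasInvPair_of_normal_prime hfix (Q : Subgroup H) 3 hQ
  · have hN : ∀ P : Sylow 3 H, Nat.card (Subgroup.normalizer (P : Set H)) = 6 := by
      intro P
      have h1 := P.card_eq_index_normalizer
      have h2 := (Subgroup.normalizer (P : Set H)).index_mul_card
      rw [← h1, hc, hn'] at h2
      omega
    set f : H →* Equiv.Perm (Sylow 3 H) := MulAction.toPermHom H (Sylow 3 H) with hf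
    have hle : ∀ P : Sylow 3 H, f.ker ≤ Subgroup.normalizer (P : Set H) := by
      intro P h hh
      rw [← Sylow.smul_eq_iff_mem_normalizer]
      have := congrArg (fun e : Equiv.Perm (Sylow 3 H) => e P) (MonoidHom.mem_ker.1 hh)
      simpa [hf] using this
    have hk : Nat.card f.ker ∣ 6 := by
      rw [← hN Q]; exact Subgroup.card_dvd_of_le (hle Q)
    have hk6 : Nat.card f.ker ≠ 6 := by
      intro h6
      have heq : ∀ P : Sylow 3 H, f.ker = Subgroup.normalizer (P : Set H) := by
        intro P
        exact Subgroup.eq_of_le_of_card_ge (hle P) (by rw [h6, hN P])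
      have : Subsingleton (Sylow 3 H) := by
        constructor
        intro P P'
        have h1 := P.isPGroup'.inf_normalizer_sylow P'
        have hl : (P : Subgroup H) ≤ Subgroup.normalizer (P : Set H) :=
          Subgroup.le_normalizer (H := (P : Subgroup H))
        rw [← heq P', heq P, inf_eq_left.2 hl] at h1
        have h2 : (P : Subgroup H) ≤ P' := inf_eq_left.1 h1.symm
        exact (Sylow.ext (P.is_maximal' P'.isPGroup' h2)).symm
      have := Nat.card_eq_one_iff_unique.2 ⟨this, ⟨Q⟩⟩
      omega
    have hk' : Nat.card f.ker = 1 ∨ Nat.card f.ker = 2 ∨ Nat.card f.ker = 3 := by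
      have := Nat.le_of_dvd (by norm_num) hk
      interval_cases Nat.card f.ker <;> omega
    rcases hk' with h | h | h
    · right
      have hinj : Function.Injective f := by
        rw [← MonoidHom.ker_eq_bot_iff]
        exact Subgroup.card_eq_one.1 h
      let e0 : Sylow 3 H ≃ Fin 4 := Finite.equivFinOfCardEq hc
      have hcard : Nat.card H = Nat.card (Equiv.Perm (Sylow 3 H)) := by
        rw [Nat.card_congr (Equiv.permCongr e0), hn', Nat.card_eq_fintype_card, Fintype.card_perm]
        rfl
      have hb : Function.Bijective f := (Nat.bijective_iff_injective_and_card f).2 ⟨hinj, hcard⟩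
      exact ⟨(MulEquiv.ofBijective f hb).trans e0.permCongrHom⟩
    · left; exact hasInvPair_of_normal_prime hfix f.ker 2 h
    · left; exact hasInvPair_of_normal_prime hfix f.ker 3 h

lemma stab_le_ker (χ : H →* ℤˣ) (x : X) (hodd : Odd (stb H x)) (h : H) (hh : h • x = x) :
    h ∈ χ.ker := by
  rw [stb_eq] at hodd
  have h1 : (⟨h, hh⟩ : stabilizer H x) ^ Nat.card (stabilizer H x) = 1 := pow_card_eq_one'
  have h2 : h ^ Nat.card (stabilizer H x) = 1 := by simpa using congrArg Subtype.val h1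
  have h3 := congrArg χ h2
  rw [map_pow, map_one] at h3
  rw [MonoidHom.mem_ker]
  rcases Int.units_eq_one_or (χ h) with h4 | h4
  · exact h4
  · rw [h4, hodd.neg_one_pow] at h3
    exact absurd h3 (by decide)

open Classical in
lemma two_odd_orbits
    (hfix : ∀ h : H, h ≠ 1 → (univ.filter fun x : X => h • x = x).card = 2)
    (χ : H →* ℤˣ) (hχ : Function.Surjective χ)
    (x y : X) (hxy : y ∉ orb H x) (hx : Odd (stb H x)) (hy : Odd (stb H y)) :
    2 * (Fintype.card H : ℤ) ≤ Fintype.card H + (orb H x).card + (orb H y).card - 2 := by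
  obtain ⟨K, hKdef⟩ : ∃ K, K = χ.ker := ⟨_, rfl⟩
  have hK : 2 * ((univ.filter fun h : H => h ∈ K).card : ℤ) = Fintype.card H := by
    have h1 := K.index_mul_card
    subst hKdef
    rw [Subgroup.index_ker, MonoidHom.range_eq_top.2 hχ] at h1
    have h2 : Nat.card (⊤ : Subgroup ℤˣ) = 2 := by
      rw [Subgroup.card_top, Nat.card_eq_fintype_card]; rfl
    rw [h2, Nat.card_eq_fintype_card, Nat.card_eq_fintype_card, Fintype.card_subtype] at h1
    rw [← h1]; push_cast; congr
  have hd := double_count hfix K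
  have key : ∀ z ∈ orb H x ∪ orb H y,
      ((univ.filter fun h : H => h ∈ K ∧ h • z = z).card : ℤ) - 1 = (stb H z : ℤ) - 1 := by
    intro z hz
    have hz' : Odd (stb H z) := by
      rcases Finset.mem_union.1 hz with h | h
      · rwa [stb_of_mem_orb h]
      · rwa [stb_of_mem_orb h]
    have : (univ.filter fun h : H => h ∈ K ∧ h • z = z) =
        univ.filter fun h : H => h • z = z := by
      ext h
      simp only [Finset.mem_filter, Finset.mem_univ, true_and]
      exact ⟨fun h => h.2, fun h' => ⟨hKdef ▸ stab_le_ker χ z hz' h h', h'⟩⟩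
    rw [this]; rfl
  have hle : ∑ z ∈ orb H x ∪ orb H y, ((stb H z : ℤ) - 1) ≤
      ∑ z : X, (((univ.filter fun h : H => h ∈ K ∧ h • z = z).card : ℤ) - 1) := by
    rw [← Finset.sum_congr rfl key]
    apply Finset.sum_le_sum_of_subset_of_nonneg (Finset.subset_univ _)
    intro z _ _
    have : 0 < (univ.filter fun h : H => h ∈ K ∧ h • z = z).card :=
      Finset.card_pos.2 ⟨1, by simp [K.one_mem]⟩
    omega
  rw [Finset.sum_union (orb_disjoint hxy), orb_sum, orb_sum, hd] at hle
  linarith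

open Classical in
lemma three_orbits
    (hfix : ∀ h : H, h ≠ 1 → (univ.filter fun x : X => h • x = x).card = 2)
    (χ : H →* ℤˣ) (hχ : Function.Surjective χ)
    (x y z : X) (hyz : z ∉ orb H y)
    (hsum : (orb H x).card + (orb H y).card + (orb H z).card = Fintype.card H + 2)
    (hx : 2 ≤ stb H x) (h12 : stb H x ≤ stb H y) (h23 : stb H y ≤ stb H z) :
    HasInvPair H X ∨ Nonempty (H ≃* Equiv.Perm (Fin 4)) := by
  have hox := orb_mul_stb (H := H) x
  have hoy := orb_mul_stb (H := H) y
  have hoz := orb_mul_stb (H := H) z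
  rcases arith _ _ _ _ _ _ _ hox hoy hoz hx h12 h23 hsum with h | h | ⟨hn, h2, h3⟩ | ⟨hn, h2, h3⟩
  · left
    refine hasInvPair_of_finset _ h ?_
    intro h w hw
    obtain ⟨a, rfl⟩ := mem_orb.1 hw
    exact mem_orb.2 ⟨h * a, mul_smul _ _ _⟩
  · exact case_24 hfix h
  · exfalso
    have := two_odd_orbits hfix χ hχ y z hyz (by rw [h2]; decide) (by rw [h3]; decide)
    rw [hn, h2] at hoy
    rw [hn, h3] at hoz
    rw [hn] at this
    push_cast at this
    omega
  · exfalso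
    have := two_odd_orbits hfix χ hχ y z hyz (by rw [h2]; decide) (by rw [h3]; decide)
    rw [hn, h2] at hoy
    rw [hn, h3] at hoz
    rw [hn] at this
    push_cast at this
    omega

lemma orb_symm {x y : X} (h : y ∉ orb H x) : x ∉ orb H y := by
  intro h'
  obtain ⟨a, rfl⟩ := mem_orb.1 h'
  exact h (mem_orb.2 ⟨a⁻¹, by simp⟩)

open Classical in
theorem abstract_main
    (hfix : ∀ h : H, h ≠ 1 → (univ.filter fun x : X => h • x = x).card = 2)
    (χ : H →* ℤˣ) (hχ : Function.Surjective χ) :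
    HasInvPair H X ∨ Nonempty (H ≃* Equiv.Perm (Fin 4)) := by
  have hn : 2 ≤ Fintype.card H := by
    have := Fintype.card_le_of_surjective χ hχ
    simpa using this
  have htot := total_sum hfix
  have hone : ∀ x : X, 1 ≤ (orb H x).card := fun x =>
    Finset.card_pos.2 ⟨x, mem_orb.2 ⟨1, by simp⟩⟩
  have hhalf : ∀ x : X, 2 ≤ stb H x → 2 * (orb H x).card ≤ Fintype.card H := fun x hx => by
    rw [← orb_mul_stb (H := H) x]; nlinarith
  -- if all points outside `T` have trivial stabilizer then the sum is over `T`
  have hext : ∀ T : Finset X, (∑ x ∈ T, ((stb H x : ℤ) - 1) ≠ 2 * (Fintype.card H - 1)) →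
      ∃ x, x ∉ T ∧ 2 ≤ stb H x := by
    intro T hT
    by_contra! hc
    apply hT
    rw [← htot]
    apply Finset.sum_subset (Finset.subset_univ _)
    intro x _ hx
    have h1 := hc x hx
    have h2 := stb_pos (H := H) x
    have : stb H x = 1 := by omega
    simp [this]
  have hbound : ∀ T : Finset X, ∑ x ∈ T, ((stb H x : ℤ) - 1) ≤ 2 * (Fintype.card H - 1) := by
    intro T
    rw [← htot]
    apply Finset.sum_le_sum_of_subset_of_nonneg (Finset.subset_univ _)
    intro x _ _
    have h2 := stb_pos (H := H) x
    omega
  obtain ⟨x, -, hx⟩ := hext ∅ (by simp; omega)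
  obtain ⟨y, hy', hy⟩ := hext (orb H x) (by rw [orb_sum]; have := hone x; omega)
  have hs2 : ∑ z ∈ orb H x ∪ orb H y, ((stb H z : ℤ) - 1) =
      2 * Fintype.card H - (orb H x).card - (orb H y).card := by
    rw [Finset.sum_union (orb_disjoint hy'), orb_sum, orb_sum]; ring
  by_cases h2 : (orb H x).card = 1 ∧ (orb H y).card = 1
  · left
    obtain ⟨h1, h2⟩ := h2
    refine hasInvPair_of_finset (orb H x ∪ orb H y) ?_ ?_
    · rw [Finset.card_union_of_disjoint (orb_disjoint hy'), h1, h2]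
    · intro h w hw
      rw [Finset.mem_union] at hw ⊢
      refine hw.imp (fun hw => ?_) (fun hw => ?_) <;>
      · obtain ⟨a, rfl⟩ := mem_orb.1 hw
        exact mem_orb.2 ⟨h * a, mul_smul _ _ _⟩
  · obtain ⟨z, hz', hz⟩ := hext (orb H x ∪ orb H y) (by
      rw [hs2]; have := hone x; have := hone y; omega)
    have hzx : z ∉ orb H x := fun h => hz' (Finset.mem_union_left _ h)
    have hzy : z ∉ orb H y := fun h => hz' (Finset.mem_union_right _ h)
    have hdis : Disjoint (orb H x ∪ orb H y) (orb H z) :=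
      Finset.disjoint_union_left.2 ⟨orb_disjoint hzx, orb_disjoint hzy⟩
    have hs3 : ∑ w ∈ (orb H x ∪ orb H y) ∪ orb H z, ((stb H w : ℤ) - 1) =
        3 * Fintype.card H - (orb H x).card - (orb H y).card - (orb H z).card := by
      rw [Finset.sum_union hdis, hs2, orb_sum]; ring
    have hsum : (orb H x).card + (orb H y).card + (orb H z).card = Fintype.card H + 2 := by
      by_contra hne
      obtain ⟨w, hw', hw⟩ := hext ((orb H x ∪ orb H y) ∪ orb H z) (by rw [hs3]; omega)
      have hdis' : Disjoint ((orb H x ∪ orb H y) ∪ orb H z) (orb H w) := by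
        rw [Finset.disjoint_union_left, Finset.disjoint_union_left]
        simp only [Finset.mem_union, not_or] at hw'
        exact ⟨⟨orb_disjoint hw'.1.1, orb_disjoint hw'.1.2⟩, orb_disjoint hw'.2⟩
      have := hbound (((orb H x ∪ orb H y) ∪ orb H z) ∪ orb H w)
      rw [Finset.sum_union hdis', hs3, orb_sum] at this
      have := hhalf x hx
      have := hhalf y hy
      have := hhalf z hz
      have := hhalf w hw
      omega
    have hyx := orb_symm hy'
    have hxz := orb_symm hzx
    have hyz := orb_symm hzy
    rcases le_total (stb H x) (stb H y) with a | a <;>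
    rcases le_total (stb H y) (stb H z) with b | b <;>
    rcases le_total (stb H x) (stb H z) with c | c
    · exact three_orbits hfix χ hχ x y z hzy hsum hx a b
    · exact three_orbits hfix χ hχ x y z hzy hsum hx a b
    · exact three_orbits hfix χ hχ x z y hyz (by omega) hx c b
    · exact three_orbits hfix χ hχ z x y hy' (by omega) hz c a
    · exact three_orbits hfix χ hχ y x z hzx (by omega) hy a c
    · exact three_orbits hfix χ hχ y z x hxz (by omega) hy b c
    · exact three_orbits hfix χ hχ z y x hyx (by omega) hz b a
    · exact three_orbits hfix χ hχ z y x hyx (by omega) hz b a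

end AbstractCount

section Concrete

open MulAction

variable {ℓ : ℕ} [Fact ℓ.Prime]

lemma mem_center_iff' {F : Type*} [Field F] (g : GL (Fin 2) F) : g ∈ Subgroup.center (GL (Fin 2) F) ↔
    g.val 0 1 = 0 ∧ g.val 1 0 = 0 ∧ g.val 0 0 = g.val 1 1 := by
  rw [Matrix.GeneralLinearGroup.mem_center_iff_val_mem_range_scalar]
  constructor
  · rintro ⟨c, hc⟩
    simp [← hc]
  · rintro ⟨h1, h2, h3⟩
    refine ⟨g.val 0 0, ?_⟩
    ext i j
    fin_cases i <;> fin_cases j <;> simp [h1, h2, h3]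

abbrev LL (ℓ : ℕ) [Fact ℓ.Prime] : Type := GaloisField ℓ 2

open Classical in
/-- action on the projective line over the quadratic extension -/
noncomputable def rho (ℓ : ℕ) [Fact ℓ.Prime] : GL2 ℓ →* Equiv.Perm (OnePoint (LL ℓ)) :=
  (MulAction.toPermHom (GL (Fin 2) (LL ℓ)) (OnePoint (LL ℓ))).comp
    (Matrix.GeneralLinearGroup.map (algebraMap (ZMod ℓ) (LL ℓ)))

noncomputable abbrev am (ℓ : ℕ) [Fact ℓ.Prime] : ZMod ℓ →+* LL ℓ := algebraMap (ZMod ℓ) (LL ℓ)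

lemma am_inj {a b : ZMod ℓ} : am ℓ a = am ℓ b ↔ a = b := (am ℓ).injective.eq_iff

lemma am_zero {a : ZMod ℓ} : am ℓ a = 0 ↔ a = 0 := by
  rw [← map_zero (am ℓ), am_inj]

open Classical in
lemma rho_infty (g : GL2 ℓ) : rho ℓ g OnePoint.infty =
    if mat g 1 0 = 0 then OnePoint.infty else ((am ℓ (mat g 0 0) / am ℓ (mat g 1 0) : LL ℓ) : OnePoint (LL ℓ)) := by
  have := OnePoint.smul_infty_eq_ite (Matrix.GeneralLinearGroup.map (am ℓ) g)
  simp only [Matrix.GeneralLinearGroup.map_apply, am_zero] at this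
  exact this

open Classical in
lemma rho_coe (g : GL2 ℓ) (k : LL ℓ) : rho ℓ g (k : OnePoint (LL ℓ)) =
    if am ℓ (mat g 1 0) * k + am ℓ (mat g 1 1) = 0 then OnePoint.infty else
    (((am ℓ (mat g 0 0) * k + am ℓ (mat g 0 1)) / (am ℓ (mat g 1 0) * k + am ℓ (mat g 1 1)) : LL ℓ) : OnePoint (LL ℓ)) := by
  have := OnePoint.smul_some_eq_ite (g := Matrix.GeneralLinearGroup.map (am ℓ) g) (k := k)
  simp only [Matrix.GeneralLinearGroup.map_apply] at this
  exact this

lemma det_mat_ne (g : GL2 ℓ) : mat g 0 0 * mat g 1 1 - mat g 0 1 * mat g 1 0 ≠ 0 := by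
  have := g.det_ne_zero
  rwa [Matrix.det_fin_two] at this

lemma rho_center (g : GL2 ℓ) (hg : g ∈ Subgroup.center (GL2 ℓ)) : rho ℓ g = 1 := by
  obtain ⟨h1, h2, h3⟩ := (mem_center_iff' g).1 hg
  have hd := det_mat_ne g
  change mat g 0 1 = 0 at h1
  change mat g 1 0 = 0 at h2
  change mat g 0 0 = mat g 1 1 at h3
  have h4 : am ℓ (mat g 1 1) ≠ 0 := by
    rw [Ne, am_zero]; intro h; apply hd; rw [h, h1]; ring
  ext p
  induction p using OnePoint.rec with
  | infty => simp [rho_infty, h2]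
  | coe k =>
    simp [rho_coe, h1, h2, h3, h4]

lemma zmod2_sq : ∀ a : ZMod 2, a ^ 2 = a := by decide

lemma exists_sqrt (a : ZMod ℓ) : ∃ s : LL ℓ, s ^ 2 = am ℓ a := by
  classical
  by_cases ha : a = 0
  · exact ⟨0, by simp [ha]⟩
  by_cases h2 : ℓ = 2
  · subst h2
    refine ⟨am 2 a, ?_⟩
    rw [← map_pow]; congr 1
    exact zmod2_sq a
  have : Fintype (LL ℓ) := Fintype.ofFinite _
  have hc : Fintype.card (LL ℓ) = ℓ ^ 2 := by
    rw [← Nat.card_eq_fintype_card]; exact GaloisField.card ℓ 2 (by norm_num)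
  have hodd : ℓ % 2 = 1 := (Fact.out : ℓ.Prime).eq_two_or_odd.resolve_left h2
  have hchar : ringChar (LL ℓ) ≠ 2 := by
    rw [ringChar.eq (LL ℓ) ℓ]; exact h2
  have hs : IsSquare (am ℓ a) := by
    rw [FiniteField.isSquare_iff hchar (by rwa [Ne, am_zero]), hc]
    have : ℓ ^ 2 / 2 = (ℓ - 1) * ((ℓ + 1) / 2) := by
      obtain ⟨k, hk⟩ : ∃ k, ℓ = 2 * k + 1 := ⟨ℓ / 2, by omega⟩
      subst hk
      have e1 : (2 * k + 1) ^ 2 / 2 = 2 * k * (k + 1) := by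
        rw [show (2 * k + 1) ^ 2 = 1 + 2 * (2 * k * (k + 1)) by ring, Nat.add_mul_div_left _ _ (by norm_num)]
        simp
      have e2 : (2 * k + 1 + 1) / 2 = k + 1 := by omega
      rw [e1, e2]; simp
    rw [this, ← map_pow, pow_mul, ZMod.pow_card_sub_one_eq_one ha]; simp
  obtain ⟨s, hs⟩ := hs
  exact ⟨s, by rw [hs, sq]⟩

lemma two_ne (hℓ : ℓ ≠ 2) : (2 : ZMod ℓ) ≠ 0 := by
  have : ((2 : ℕ) : ZMod ℓ) ≠ 0 := by
    rw [Ne, ZMod.natCast_eq_zero_iff]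
    intro h
    exact hℓ ((Nat.prime_dvd_prime_iff_eq Fact.out Nat.prime_two).1 h)
  exact_mod_cast this

lemma fix_diag (g : GL2 ℓ) (hg : IsDiag g) (hc : g ∉ Subgroup.center (GL2 ℓ))
    (p : OnePoint (LL ℓ)) : rho ℓ g p = p ↔ p = OnePoint.infty ∨ p = ((0 : LL ℓ) : OnePoint (LL ℓ)) := by
  have hd := det_mat_ne g
  obtain ⟨h1, h2⟩ := hg
  rw [mem_center_iff'] at hc
  have h3 : am ℓ (mat g 0 0) ≠ am ℓ (mat g 1 1) := by
    rw [Ne, am_inj]; exact fun h => hc ⟨h1, h2, h⟩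
  have h4 : am ℓ (mat g 1 1) ≠ 0 := by
    rw [Ne, am_zero]; intro h; apply hd; rw [h, h1]; ring
  induction p using OnePoint.rec with
  | infty => simp [rho_infty, h2]
  | coe k =>
    simp only [rho_coe, h1, h2, map_zero, zero_mul, zero_add, h4, if_false, add_zero,
      OnePoint.coe_eq_coe, OnePoint.coe_ne_infty, false_or]
    rw [div_eq_iff h4]
    constructor
    · intro h
      by_contra hk
      apply h3
      apply mul_right_cancel₀ hk
      rw [h]; ring
    · rintro rfl; simp

lemma fix_anti (hℓ : ℓ ≠ 2) (g : GL2 ℓ) (hg : IsAnti g) :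
    ∃ s : LL ℓ, s ≠ -s ∧ ∀ p : OnePoint (LL ℓ), rho ℓ g p = p ↔ p = (s : OnePoint (LL ℓ)) ∨ p = ((-s : LL ℓ) : OnePoint (LL ℓ)) := by
  have hd := det_mat_ne g
  obtain ⟨h1, h2⟩ := hg
  have hb : mat g 0 1 ≠ 0 := by intro h; apply hd; rw [h1, h]; ring
  have hc : mat g 1 0 ≠ 0 := by intro h; apply hd; rw [h1, h]; ring
  obtain ⟨s, hs⟩ := exists_sqrt (mat g 0 1 / mat g 1 0)
  have hb' : am ℓ (mat g 0 1) ≠ 0 := by rwa [Ne, am_zero]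
  have hc' : am ℓ (mat g 1 0) ≠ 0 := by rwa [Ne, am_zero]
  rw [map_div₀] at hs
  have hs0 : s ≠ 0 := by
    rintro rfl
    rw [zero_pow (by norm_num), eq_comm, div_eq_zero_iff] at hs
    tauto
  have h2' : (2 : LL ℓ) ≠ 0 := by
    have := two_ne hℓ
    rw [Ne, ← am_zero, map_ofNat] at this
    exact this
  refine ⟨s, ?_, ?_⟩
  · intro h
    have : 2 * s = 0 := by linear_combination h
    rcases mul_eq_zero.1 this with h | h
    · exact h2' h
    · exact hs0 h
  intro p
  induction p using OnePoint.rec with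
  | infty => simp [rho_infty, hc]
  | coe k =>
    have hden : am ℓ (mat g 1 0) * k + am ℓ (mat g 1 1) = am ℓ (mat g 1 0) * k := by
      rw [h2, map_zero, add_zero]
    have hnum : am ℓ (mat g 0 0) * k + am ℓ (mat g 0 1) = am ℓ (mat g 0 1) := by
      rw [h1, map_zero, zero_mul, zero_add]
    rw [rho_coe, OnePoint.coe_eq_coe, OnePoint.coe_eq_coe]
    by_cases hk : k = 0
    · subst hk
      rw [if_pos (by rw [hden, mul_zero])]
      constructor
      · intro h; exact absurd h (OnePoint.infty_ne_coe _)
      · rintro (h | h)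
        · exact absurd h.symm hs0
        · exact absurd (neg_eq_zero.1 h.symm) hs0
    · rw [if_neg (by rw [hden]; exact mul_ne_zero hc' hk), hden, hnum, OnePoint.coe_eq_coe, ← sq_eq_sq_iff_eq_or_eq_neg, hs, div_eq_iff (mul_ne_zero hc' hk), eq_div_iff hc']
      constructor
      · intro h; rw [h]; ring
      · intro h; rw [← h]; ring

lemma perm_conj_fix {α : Type*} (x g : Equiv.Perm α) (p : α) :
    g p = p ↔ (x * g * x⁻¹) (x p) = x p := by
  simp [Equiv.Perm.mul_apply]

lemma perm_apply_inv {α : Type*} (x : Equiv.Perm α) (p : α) : x (x⁻¹ p) = p := by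
  simp

lemma perm_conj_apply {α : Type*} (x g : Equiv.Perm α) (p : α) :
    (x * g * x⁻¹) p = x (g (x⁻¹ p)) := rfl

lemma rho_conj_fix (x g : GL2 ℓ) (p : OnePoint (LL ℓ)) :
    rho ℓ g p = p ↔ rho ℓ (x * g * x⁻¹) (rho ℓ x p) = rho ℓ x p := by
  rw [map_mul, map_mul, map_inv]
  exact perm_conj_fix _ _ _

lemma center_conj (x g : GL2 ℓ) : x * g * x⁻¹ ∈ Subgroup.center (GL2 ℓ) ↔ g ∈ Subgroup.center (GL2 ℓ) := by
  constructor
  · intro h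
    have := (inferInstance : (Subgroup.center (GL2 ℓ)).Normal).conj_mem _ h x⁻¹
    simpa [mul_assoc] using this
  · intro h
    exact (inferInstance : (Subgroup.center (GL2 ℓ)).Normal).conj_mem _ h x

/-- a noncentral locally-normalizer element has exactly two fixed points -/
lemma fix_two (hℓ : ℓ ≠ 2) (g x : GL2 ℓ) (hx : InNsp (x * g * x⁻¹))
    (hc : g ∉ Subgroup.center (GL2 ℓ)) :
    ∃ P Q : OnePoint (LL ℓ), P ≠ Q ∧ ∀ p, rho ℓ g p = p ↔ p = P ∨ p = Q := by
  have key : ∃ P Q : OnePoint (LL ℓ), P ≠ Q ∧ ∀ p, rho ℓ (x * g * x⁻¹) p = p ↔ p = P ∨ p = Q := by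
    rcases hx with h | h
    · exact ⟨_, _, OnePoint.infty_ne_coe 0, fix_diag _ h (by rwa [center_conj])⟩
    · obtain ⟨s, hs, h⟩ := fix_anti hℓ _ h
      exact ⟨s, (-s : LL ℓ), by rwa [Ne, OnePoint.coe_eq_coe], h⟩
  obtain ⟨P, Q, hPQ, h⟩ := key
  refine ⟨(rho ℓ x).symm P, (rho ℓ x).symm Q, by simpa using hPQ, fun p => ?_⟩
  rw [rho_conj_fix x, h, Equiv.eq_symm_apply, Equiv.eq_symm_apply]

/-- If `g` stabilises the fixed points of a split element then it is in the normalizer. -/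
lemma normalizes (g1 x g : GL2 ℓ) (hx : IsDiag (x * g1 * x⁻¹)) (hc : g1 ∉ Subgroup.center (GL2 ℓ))
    (hst : ∀ p, rho ℓ g1 p = p → rho ℓ g1 (rho ℓ g p) = rho ℓ g p) : InNsp (x * g * x⁻¹) := by
  set c := x * g * x⁻¹ with hcdef
  have hf := fix_diag _ hx (by rwa [center_conj])
  have hst' : ∀ p, (p = OnePoint.infty ∨ p = ((0 : LL ℓ) : OnePoint (LL ℓ))) →
      (rho ℓ c p = OnePoint.infty ∨ rho ℓ c p = ((0 : LL ℓ) : OnePoint (LL ℓ))) := by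
    intro p hp
    rw [← hf] at hp ⊢
    have h1 : rho ℓ g1 ((rho ℓ x)⁻¹ p) = (rho ℓ x)⁻¹ p := by
      rw [rho_conj_fix x, perm_apply_inv]; exact hp
    have h2 := hst _ h1
    rw [rho_conj_fix x] at h2
    rw [hcdef, map_mul (rho ℓ) (x * g), map_mul (rho ℓ) x g, map_inv, perm_conj_apply]
    exact h2
  have hi := hst' _ (Or.inl rfl)
  have h0 := hst' _ (Or.inr rfl)
  have hne : rho ℓ c OnePoint.infty ≠ rho ℓ c ((0 : LL ℓ) : OnePoint (LL ℓ)) :=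
    fun h => OnePoint.infty_ne_coe _ ((rho ℓ c).injective h)
  have hd := det_mat_ne c
  have e1 : rho ℓ c OnePoint.infty = OnePoint.infty → mat c 1 0 = 0 := by
    intro h; rw [rho_infty] at h; by_contra h'
    rw [if_neg h'] at h
    exact OnePoint.coe_ne_infty _ h
  have e2 : rho ℓ c OnePoint.infty = ((0 : LL ℓ) : OnePoint (LL ℓ)) → mat c 0 0 = 0 := by
    intro h; rw [rho_infty] at h
    split_ifs at h with h'
    · exact absurd h (OnePoint.infty_ne_coe _)
    · rw [OnePoint.coe_eq_coe, div_eq_zero_iff, am_zero, am_zero] at h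
      exact h.resolve_right h'
  have e3 : rho ℓ c ((0 : LL ℓ) : OnePoint (LL ℓ)) = OnePoint.infty → mat c 1 1 = 0 := by
    intro h; rw [rho_coe] at h; by_contra h'
    rw [if_neg (by rw [mul_zero, zero_add, am_zero]; exact h')] at h
    exact OnePoint.coe_ne_infty _ h
  have e4 : rho ℓ c ((0 : LL ℓ) : OnePoint (LL ℓ)) = ((0 : LL ℓ) : OnePoint (LL ℓ)) → mat c 0 1 = 0 := by
    intro h; rw [rho_coe] at h
    split_ifs at h with h'
    · exact absurd h (OnePoint.infty_ne_coe _)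
    · rw [OnePoint.coe_eq_coe, div_eq_zero_iff] at h
      have h3 := h.resolve_right h'
      rw [mul_zero, zero_add, am_zero] at h3
      exact h3
  rcases hi with hi | hi <;> rcases h0 with h0 | h0
  · exact absurd (hi.trans h0.symm) hne
  · exact Or.inl ⟨e4 h0, e1 hi⟩
  · exact Or.inr ⟨e2 hi, e3 h0⟩
  · exact absurd (hi.trans h0.symm) hne

open Classical in
lemma two_trans {F : Type*} [Field F] (P Q : OnePoint F) (hPQ : P ≠ Q) :
    ∃ y : GL (Fin 2) F, y • P = OnePoint.infty ∧ y • Q = ((0 : F) : OnePoint F) := by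
  induction P using OnePoint.rec with
  | infty =>
    induction Q using OnePoint.rec with
    | infty => exact absurd rfl hPQ
    | coe q =>
      refine ⟨Matrix.GeneralLinearGroup.mkOfDetNeZero !![1, -q; 0, 1] (by simp), ?_, ?_⟩
      · rw [OnePoint.smul_infty_eq_ite]; simp [Matrix.GeneralLinearGroup.mkOfDetNeZero]
      · rw [OnePoint.smul_some_eq_ite]; simp [Matrix.GeneralLinearGroup.mkOfDetNeZero]
  | coe p =>
    induction Q using OnePoint.rec with
    | infty =>
      refine ⟨Matrix.GeneralLinearGroup.mkOfDetNeZero !![0, 1; 1, -p] (by simp), ?_, ?_⟩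
      · rw [OnePoint.smul_some_eq_ite]; simp [Matrix.GeneralLinearGroup.mkOfDetNeZero]
      · rw [OnePoint.smul_infty_eq_ite]; simp [Matrix.GeneralLinearGroup.mkOfDetNeZero]
    | coe q =>
      have hpq : q - p ≠ 0 := by
        rw [sub_ne_zero]; rintro rfl; exact hPQ rfl
      have hpq' : q + -p ≠ 0 := by rwa [← sub_eq_add_neg]
      refine ⟨Matrix.GeneralLinearGroup.mkOfDetNeZero !![1, -q; 1, -p] (by
        rw [Matrix.det_fin_two_of]; intro h; apply hpq; linear_combination h), ?_, ?_⟩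
      · rw [OnePoint.smul_some_eq_ite]; simp [Matrix.GeneralLinearGroup.mkOfDetNeZero]
      · rw [OnePoint.smul_some_eq_ite]; simp [Matrix.GeneralLinearGroup.mkOfDetNeZero, hpq']

open Classical in
lemma diag_of_fix {F : Type*} [Field F] (A : GL (Fin 2) F)
    (h1 : A • (OnePoint.infty : OnePoint F) = OnePoint.infty)
    (h2 : A • ((0 : F) : OnePoint F) = ((0 : F) : OnePoint F)) : A.val 0 1 = 0 ∧ A.val 1 0 = 0 := by
  have h3 := OnePoint.smul_infty_eq_self_iff.1 h1
  refine ⟨?_, h3⟩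
  rw [OnePoint.smul_some_eq_ite] at h2
  split_ifs at h2 with h
  · simp at h2
  · rw [OnePoint.coe_eq_coe, div_eq_zero_iff] at h2
    rcases h2 with h2 | h2
    · simpa using h2
    · exact absurd h2 h

/-- Two trace zero elements with the same pair of fixed points agree projectively. -/
lemma trace_zero_mul (g g' : GL2 ℓ) (P Q : OnePoint (LL ℓ)) (hPQ : P ≠ Q)
    (ht : (mat g).trace = 0) (ht' : (mat g').trace = 0)
    (hP : rho ℓ g P = P) (hQ : rho ℓ g Q = Q) (hP' : rho ℓ g' P = P) (hQ' : rho ℓ g' Q = Q) :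
    g * g' ∈ Subgroup.center (GL2 ℓ) := by
  classical
  obtain ⟨y, hyP, hyQ⟩ := two_trans P Q hPQ
  have key : ∀ g : GL2 ℓ, (mat g).trace = 0 → rho ℓ g P = P → rho ℓ g Q = Q →
      (y * Matrix.GeneralLinearGroup.map (am ℓ) g * y⁻¹).val 0 1 = 0 ∧
      (y * Matrix.GeneralLinearGroup.map (am ℓ) g * y⁻¹).val 1 0 = 0 ∧
      (y * Matrix.GeneralLinearGroup.map (am ℓ) g * y⁻¹).val 0 0 =
      - (y * Matrix.GeneralLinearGroup.map (am ℓ) g * y⁻¹).val 1 1 := by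
    intro g ht hP hQ
    have hP1 : Matrix.GeneralLinearGroup.map (am ℓ) g • P = P := by
      convert hP; simp only [rho]; rfl
    have hQ1 : Matrix.GeneralLinearGroup.map (am ℓ) g • Q = Q := by
      convert hQ; simp only [rho]; rfl
    have := diag_of_fix (y * Matrix.GeneralLinearGroup.map (am ℓ) g * y⁻¹)
      (by rw [← hyP]; simp [mul_smul, hP1]) (by rw [← hyQ]; simp [mul_smul, hQ1])
    refine ⟨this.1, this.2, ?_⟩
    have htr : (y * Matrix.GeneralLinearGroup.map (am ℓ) g * y⁻¹).val.trace = 0 := by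
      have e1 : (y * Matrix.GeneralLinearGroup.map (am ℓ) g * y⁻¹).val =
        y.val * (Matrix.GeneralLinearGroup.map (am ℓ) g).val * (y⁻¹).val := rfl
      rw [e1, Matrix.trace_units_conj]
      rw [Matrix.trace_fin_two] at ht ⊢
      have := congrArg (am ℓ) ht
      simpa [mat] using this
    rw [Matrix.trace_fin_two] at htr
    linear_combination htr
  obtain ⟨a1, a2, a3⟩ := key g ht hP hQ
  obtain ⟨b1, b2, b3⟩ := key g' ht' hP' hQ'
  have hcen : (y * Matrix.GeneralLinearGroup.map (am ℓ) g * y⁻¹) *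
      (y * Matrix.GeneralLinearGroup.map (am ℓ) g' * y⁻¹) ∈ Subgroup.center (GL (Fin 2) (LL ℓ)) := by
    rw [mem_center_iff']
    simp only [Units.val_mul (y * Matrix.GeneralLinearGroup.map (am ℓ) g * y⁻¹), Matrix.mul_apply, Fin.sum_univ_two]
    rw [a1, a2, a3, b1, b2, b3]
    refine ⟨by ring, by ring, by ring⟩
  have h2 : y * Matrix.GeneralLinearGroup.map (am ℓ) (g * g') * y⁻¹ ∈ Subgroup.center (GL (Fin 2) (LL ℓ)) := by
    rw [Matrix.GeneralLinearGroup.map_mul]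
    convert hcen using 1
    group
  have h3 := (inferInstance : (Subgroup.center (GL (Fin 2) (LL ℓ))).Normal).conj_mem _ h2 y⁻¹
  have h4 : Matrix.GeneralLinearGroup.map (am ℓ) (g * g') ∈ Subgroup.center (GL (Fin 2) (LL ℓ)) := by
    simpa [mul_assoc] using h3
  rw [mem_center_iff'] at h4 ⊢
  simp only [Matrix.GeneralLinearGroup.map_apply, am_zero, am_inj] at h4
  exact h4

lemma trace_anti (g x : GL2 ℓ) (h : IsAnti (x * g * x⁻¹)) : (mat g).trace = 0 := by
  have e1 : (mat (x * g * x⁻¹)) = x.val * g.val * (x⁻¹).val := rfl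
  have := congrArg Matrix.trace e1
  rw [Matrix.trace_units_conj, Matrix.trace_fin_two, h.1, h.2, add_zero] at this
  exact this.symm

lemma det_conj_mat (g x : GL2 ℓ) : (mat (x * g * x⁻¹)).det = (mat g).det := by
  have e1 : (mat (x * g * x⁻¹)) = x.val * g.val * (x⁻¹).val := rfl
  rw [e1, Matrix.det_units_conj]; rfl

/-- An antidiagonal element with `-det` a square is split. -/
lemma split_of_square (hℓ : ℓ ≠ 2) (g x : GL2 ℓ) (h : IsAnti (x * g * x⁻¹))
    (hs : IsSquare (-(mat g).det)) : ∃ y : GL2 ℓ, IsDiag (y * g * y⁻¹) := by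
  set A := x * g * x⁻¹ with hA
  rw [← det_conj_mat g x, ← hA, Matrix.det_fin_two, h.1, h.2] at hs
  obtain ⟨d, hd⟩ := hs
  have hdet := det_mat_ne A
  rw [h.1] at hdet
  have hc : mat A 1 0 ≠ 0 := by intro h; apply hdet; rw [h]; ring
  have hd0 : d ≠ 0 := by rintro rfl; apply hdet; linear_combination -hd
  have h2 := two_ne hℓ
  set c := mat A 1 0 with hcdef
  let y : GL2 ℓ := Matrix.GeneralLinearGroup.mkOfDetNeZero !![c, d; c, -d] (by
    rw [Matrix.det_fin_two_of]
    have : c * -d - d * c = -(2 * (c * d)) := by ring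
    rw [this]
    exact neg_ne_zero.2 (mul_ne_zero h2 (mul_ne_zero hc hd0)))
  have hAm : A.val = !![0, mat A 0 1; c, 0] := by
    ext i j
    fin_cases i <;> fin_cases j
    · exact h.1
    · rfl
    · rfl
    · exact h.2
  have hyA : y.val * A.val = !![d, 0; 0, -d] * y.val := by
    rw [hAm]
    change !![c, d; c, -d] * _ = _ * !![c, d; c, -d]
    have hd' : c * mat A 0 1 = d * d := by linear_combination hd
    ext i j
    fin_cases i <;> fin_cases j <;> simp [Matrix.mul_apply, Fin.sum_univ_two, hd', mul_comm]
  have hfin : mat (y * A * y⁻¹) = !![d, 0; 0, -d] := by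
    have e1 : mat (y * A * y⁻¹) = y.val * A.val * (y⁻¹).val := rfl
    rw [e1, hyA, Matrix.mul_assoc, Units.mul_inv, Matrix.mul_one]
  refine ⟨y * x, ?_⟩
  have : y * x * g * (y * x)⁻¹ = y * A * y⁻¹ := by rw [hA]; group
  rw [this]
  constructor <;> rw [hfin] <;> simp

end Concrete

section Final

variable {ℓ : ℕ} [Fact ℓ.Prime]

lemma mat_mul_apply (a b : GL2 ℓ) (i j : Fin 2) :
    mat (a * b) i j = mat a i 0 * mat b 0 j + mat a i 1 * mat b 1 j := by
  change (a.val * b.val) i j = _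
  rw [Matrix.mul_apply, Fin.sum_univ_two]; rfl

lemma mem_center_mat (g : GL2 ℓ) : g ∈ Subgroup.center (GL2 ℓ) ↔
    mat g 0 1 = 0 ∧ mat g 1 0 = 0 ∧ mat g 0 0 = mat g 1 1 := mem_center_iff' g

lemma mat_det_ne (g : GL2 ℓ) : (mat g).det ≠ 0 := g.det_ne_zero

/-- the quadratic character of the determinant -/
noncomputable def chi (ℓ : ℕ) [Fact ℓ.Prime] : GL2 ℓ →* ℤˣ :=
  (quadraticChar (ZMod ℓ)).toUnitHom.comp Matrix.GeneralLinearGroup.det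

lemma chi_eq_one_iff (g : GL2 ℓ) : chi ℓ g = 1 ↔ IsSquare (mat g).det := by
  rw [← quadraticChar_one_iff_isSquare (mat_det_ne g), Units.ext_iff]
  rfl

lemma chi_center (g : GL2 ℓ) (hg : g ∈ Subgroup.center (GL2 ℓ)) : chi ℓ g = 1 := by
  rw [chi_eq_one_iff]
  obtain ⟨h1, h2, h3⟩ := (mem_center_mat g).1 hg
  rw [Matrix.det_fin_two, h1, h3]
  exact ⟨mat g 1 1, by ring⟩

lemma chi_neg (g : GL2 ℓ) : chi ℓ g = -1 ↔ ¬ IsSquare (mat g).det := by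
  rw [← chi_eq_one_iff]
  rcases Int.units_eq_one_or (chi ℓ g) with h | h <;> rw [h] <;> decide

lemma exists_chi_neg (hℓ : ℓ ≠ 2) (G : Subgroup (GL2 ℓ))
    (hdet : ∀ u : (ZMod ℓ)ˣ, ∃ g ∈ G, Matrix.GeneralLinearGroup.det g = u) :
    ∃ g ∈ G, chi ℓ g = -1 := by
  obtain ⟨a, ha⟩ := FiniteField.exists_nonsquare (F := ZMod ℓ) (by rw [ZMod.ringChar_zmod_n]; exact hℓ)
  have ha0 : a ≠ 0 := by rintro rfl; exact ha (IsSquare.zero)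
  obtain ⟨g, hg, h⟩ := hdet (Units.mk0 a ha0)
  refine ⟨g, hg, ?_⟩
  rw [chi_neg]
  have : (mat g).det = a := by
    have := congrArg Units.val h
    exact this
  rwa [this]

lemma nonsplit_props (hℓ : ℓ ≠ 2) (g : GL2 ℓ) (hloc : ∃ x : GL2 ℓ, InNsp (x * g * x⁻¹))
    (hns : ¬ ∃ y : GL2 ℓ, IsDiag (y * g * y⁻¹)) :
    ¬ IsSquare (-(mat g).det) ∧ (mat g).trace = 0 := by
  obtain ⟨x, h | h⟩ := hloc
  · exact absurd ⟨x, h⟩ hns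
  · exact ⟨fun hs => hns (split_of_square hℓ g x h hs), trace_anti g x h⟩

lemma inNsp_center_mul (z a : GL2 ℓ) (hz : z ∈ Subgroup.center (GL2 ℓ)) (ha : InNsp a) :
    InNsp (z * a) := by
  obtain ⟨h1, h2, h3⟩ := (mem_center_mat z).1 hz
  rcases ha with ⟨h, h'⟩ | ⟨h, h'⟩
  · left; constructor <;> rw [mat_mul_apply] <;> simp [h1, h2, h, h']
  · right; constructor <;> rw [mat_mul_apply] <;> simp [h1, h2, h, h']

lemma neg_sq_aux (hℓ : ℓ ≠ 2) (d e : ZMod ℓ) (hd : d ≠ 0) (he : e ≠ 0) (h1 : ¬ IsSquare d) (h2 : ¬ IsSquare (-d))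
    (h3 : ¬ IsSquare (-e)) : ¬ IsSquare e := by
  have hF : ringChar (ZMod ℓ) ≠ 2 := by rw [ZMod.ringChar_zmod_n]; exact hℓ
  rw [← quadraticChar_neg_one_iff_not_isSquare] at *
  rw [neg_eq_neg_one_mul, map_mul] at h2 h3
  rw [h1] at h2
  have h4 : quadraticChar (ZMod ℓ) (-1) = 1 := by linarith
  rw [h4, one_mul] at h3
  exact h3

lemma all_nonsplit (hℓ : ℓ ≠ 2) (G : Subgroup (GL2 ℓ))
    (hloc : ∀ g ∈ G, ∃ x : GL2 ℓ, InNsp (x * g * x⁻¹))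
    (hdet : ∀ u : (ZMod ℓ)ˣ, ∃ g ∈ G, Matrix.GeneralLinearGroup.det g = u)
    (hns : ∀ g ∈ G, g ∉ Subgroup.center (GL2 ℓ) → ¬ ∃ y : GL2 ℓ, IsDiag (y * g * y⁻¹)) :
    ∃ x : GL2 ℓ, ∀ g ∈ G, InNsp (x * g * x⁻¹) := by
  obtain ⟨g0, hg0, hc0⟩ := exists_chi_neg hℓ G hdet
  have hn0 : g0 ∉ Subgroup.center (GL2 ℓ) := by
    intro h; rw [chi_center g0 h] at hc0; exact absurd hc0 (by decide)
  have hneg : ∀ g ∈ G, g ∉ Subgroup.center (GL2 ℓ) → chi ℓ g = -1 := by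
    intro g hg hgc
    rw [chi_neg] at hc0 ⊢
    exact neg_sq_aux hℓ (mat g0).det (mat g).det (mat_det_ne _) (mat_det_ne _) hc0
      (nonsplit_props hℓ g0 (hloc g0 hg0) (hns g0 hg0 hn0)).1
      (nonsplit_props hℓ g (hloc g hg) (hns g hg hgc)).1
  have hprod : ∀ g ∈ G, g ∉ Subgroup.center (GL2 ℓ) → g * g0 ∈ Subgroup.center (GL2 ℓ) := by
    intro g hg hgc
    by_contra h
    have h1 := hneg _ (G.mul_mem hg hg0) h
    rw [map_mul, hneg g hg hgc, hc0] at h1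
    exact absurd h1 (by decide)
  obtain ⟨x, hx⟩ := hloc g0 hg0
  refine ⟨x, fun g hg => ?_⟩
  by_cases hgc : g ∈ Subgroup.center (GL2 ℓ)
  · have h := (center_conj x g).2 hgc
    rw [mem_center_mat] at h
    exact Or.inl ⟨h.1, h.2.1⟩
  · have hz := Subgroup.mul_mem _ (hprod g hg hgc) (Subgroup.inv_mem _ (hprod g0 hg0 hn0))
    have h2 := inNsp_center_mul _ _ ((center_conj x _).2 hz) hx
    have e : x * (g * g0 * (g0 * g0)⁻¹) * x⁻¹ * (x * g0 * x⁻¹) = x * g * x⁻¹ := by group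
    rwa [e] at h2

lemma fix_eq (hℓ : ℓ ≠ 2) (g x : GL2 ℓ) (hx : InNsp (x * g * x⁻¹))
    (hc : g ∉ Subgroup.center (GL2 ℓ)) (P Q : OnePoint (LL ℓ)) (hPQ : P ≠ Q)
    (hP : rho ℓ g P = P) (hQ : rho ℓ g Q = Q) (p) : rho ℓ g p = p → p = P ∨ p = Q := by
  obtain ⟨P', Q', hPQ', h⟩ := fix_two hℓ g x hx hc
  intro hp
  rcases (h p).1 hp with h1 | h1 <;> rcases (h P).1 hP with h2 | h2 <;>
    rcases (h Q).1 hQ with h3 | h3 <;> subst h2 <;> subst h1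
  · exact Or.inl rfl
  · exact Or.inl rfl
  · exact Or.inr h3.symm
  · exact absurd h3.symm hPQ
  · exact absurd h3.symm hPQ
  · exact Or.inr h3.symm
  · exact Or.inl rfl
  · exact Or.inl rfl

lemma invpair_case (hℓ : ℓ ≠ 2) (G : Subgroup (GL2 ℓ))
    (hloc : ∀ g ∈ G, ∃ x : GL2 ℓ, InNsp (x * g * x⁻¹))
    (hdet : ∀ u : (ZMod ℓ)ˣ, ∃ g ∈ G, Matrix.GeneralLinearGroup.det g = u)
    (P Q : OnePoint (LL ℓ)) (hPQ : P ≠ Q)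
    (hinv : ∀ g ∈ G, (rho ℓ g P = P ∧ rho ℓ g Q = Q) ∨ (rho ℓ g P = Q ∧ rho ℓ g Q = P)) :
    ∃ x : GL2 ℓ, ∀ g ∈ G, InNsp (x * g * x⁻¹) := by
  by_cases h1 : ∃ g1 ∈ G, g1 ∉ Subgroup.center (GL2 ℓ) ∧ (rho ℓ g1 P = P ∧ rho ℓ g1 Q = Q) ∧
      ∃ x : GL2 ℓ, IsDiag (x * g1 * x⁻¹)
  · obtain ⟨g1, hg1, hgc, ⟨hP, hQ⟩, x, hx⟩ := h1
    refine ⟨x, fun g hg => normalizes g1 x g hx hgc ?_⟩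
    intro p hp
    have := fix_eq hℓ g1 x (Or.inl hx) hgc P Q hPQ hP hQ p hp
    rcases hinv g hg with ⟨a, b⟩ | ⟨a, b⟩ <;> rcases this with h | h <;> subst h
    · rw [a, hP]
    · rw [b, hQ]
    · rw [a, hQ]
    · rw [b, hP]
  by_cases h2 : ∃ g1 ∈ G, g1 ∉ Subgroup.center (GL2 ℓ) ∧ ∃ x : GL2 ℓ, IsDiag (x * g1 * x⁻¹)
  swap
  · refine all_nonsplit hℓ G hloc hdet fun g hg hgc hy => h2 ⟨g, hg, hgc, hy⟩
  obtain ⟨g1, hg1, hgc, x, hx⟩ := h2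
  have hsw : rho ℓ g1 P = Q ∧ rho ℓ g1 Q = P :=
    (hinv g1 hg1).resolve_left fun h => h1 ⟨g1, hg1, hgc, h, x, hx⟩
  have htr : ∀ k ∈ G, k ∉ Subgroup.center (GL2 ℓ) → (rho ℓ k P = P ∧ rho ℓ k Q = Q) →
      (mat k).trace = 0 := fun k hk hkc hf =>
    (nonsplit_props hℓ k (hloc k hk) fun h => h1 ⟨k, hk, hkc, hf, h⟩).2
  have hcomm : ∀ k ∈ G, (rho ℓ k P = P ∧ rho ℓ k Q = Q) → rho ℓ g1 * rho ℓ k = rho ℓ k * rho ℓ g1 := by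
    intro k hk hf
    by_cases hkc : k ∈ Subgroup.center (GL2 ℓ)
    · rw [rho_center k hkc, mul_one, one_mul]
    have hk' : g1 * k * g1⁻¹ ∈ G := G.mul_mem (G.mul_mem hg1 hk) (G.inv_mem hg1)
    have hkc' : g1 * k * g1⁻¹ ∉ Subgroup.center (GL2 ℓ) := by rwa [center_conj]
    have hf' : rho ℓ (g1 * k * g1⁻¹) P = P ∧ rho ℓ (g1 * k * g1⁻¹) Q = Q := by
      have a := (rho_conj_fix g1 k P).1 hf.1
      have b := (rho_conj_fix g1 k Q).1 hf.2
      rw [hsw.1] at a; rw [hsw.2] at b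
      exact ⟨b, a⟩
    have c1 := rho_center _ (trace_zero_mul k _ P Q hPQ (htr k hk hkc hf) (htr _ hk' hkc' hf')
      hf.1 hf.2 hf'.1 hf'.2)
    have c2 := rho_center _ (trace_zero_mul k k P Q hPQ (htr k hk hkc hf) (htr _ hk hkc hf)
      hf.1 hf.2 hf.1 hf.2)
    rw [map_mul] at c1 c2
    have c3 := mul_left_cancel (c1.trans c2.symm)
    rw [map_mul, map_mul, map_inv, mul_inv_eq_iff_eq_mul] at c3
    exact c3
  have hcomm2 : ∀ g ∈ G, rho ℓ g1 * rho ℓ g = rho ℓ g * rho ℓ g1 := by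
    intro g hg
    rcases hinv g hg with hf | hf
    · exact hcomm g hg hf
    · have := hcomm (g * g1) (G.mul_mem hg hg1) (by
        rw [map_mul, Equiv.Perm.mul_apply, Equiv.Perm.mul_apply, hsw.1, hsw.2]
        exact ⟨hf.2, hf.1⟩)
      rw [map_mul, ← mul_assoc] at this
      exact mul_right_cancel this
  refine ⟨x, fun g hg => normalizes g1 x g hx hgc fun p hp => ?_⟩
  have := congrArg (fun f : Equiv.Perm (OnePoint (LL ℓ)) => f p) (hcomm2 g hg)
  simp only [Equiv.Perm.mul_apply] at this
  rw [this, hp]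

lemma num4 (hℓ : ℓ ≠ 2) (a b : ZMod ℓ) (hb : b ≠ 0) (h2 : a * a ≠ b * b)
    (h4 : (a * a) * (a * a) = (b * b) * (b * b)) (hs : ¬ IsSquare (a * b)) : ℓ % 8 = 5 := by
  have hodd : ℓ % 2 = 1 := (Fact.out : ℓ.Prime).eq_two_or_odd.resolve_left hℓ
  have h5 : a * a = - (b * b) := by
    have : (a * a - b * b) * (a * a + b * b) = 0 := by linear_combination h4
    rcases mul_eq_zero.1 this with h | h
    · exact absurd (sub_eq_zero.1 h) h2
    · linear_combination h
  have ht2 : (a / b) * (a / b) = -1 := by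
    rw [div_mul_div_comm, h5, neg_div, div_self (mul_ne_zero hb hb)]
  have h43 : ℓ % 4 ≠ 3 := by
    rw [← ZMod.exists_sq_eq_neg_one_iff]
    exact ⟨a / b, ht2.symm⟩
  have hns : ¬ IsSquare (a / b) := by
    rintro ⟨s, hs'⟩
    apply hs
    refine ⟨s * b, ?_⟩
    rw [div_eq_iff hb] at hs'
    rw [hs']; ring
  have ht0 : a / b ≠ 0 := by
    intro h; rw [h] at hns; exact hns IsSquare.zero
  rw [ZMod.euler_criterion ℓ ht0] at hns
  by_contra h8
  apply hns
  have e : ℓ / 2 = 2 * (2 * (ℓ / 8)) := by omega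
  rw [e, pow_mul, sq, ht2, pow_mul]
  simp

lemma num3 (a b : ZMod ℓ) (hb : b ≠ 0) (hab : a ≠ b)
    (h3 : a * a * a = b * b * b) : ℓ % 3 = 1 := by
  have ht : (a / b) ^ 3 = 1 := by
    rw [div_pow, div_eq_one_iff_eq (pow_ne_zero _ hb)]
    linear_combination h3
  have hne : a / b ≠ 1 := by rwa [Ne, div_eq_one_iff_eq hb]
  have : Fact (Nat.Prime 3) := ⟨Nat.prime_three⟩
  have ho := orderOf_eq_prime ht hne
  have h0 : a / b ≠ 0 := by intro h; rw [h] at ht; simp at ht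
  have := orderOf_dvd_of_pow_eq_one (ZMod.pow_card_sub_one_eq_one h0)
  rw [ho] at this
  have := (Fact.out : ℓ.Prime).two_le
  omega

lemma elt4 (hℓ : ℓ ≠ 2) (g : GL2 ℓ) (hloc : ∃ x : GL2 ℓ, InNsp (x * g * x⁻¹))
    (h2 : g * g ∉ Subgroup.center (GL2 ℓ)) (h4 : (g * g) * (g * g) ∈ Subgroup.center (GL2 ℓ))
    (hchi : chi ℓ g = -1) : ℓ % 8 = 5 := by
  obtain ⟨x, hx⟩ := hloc
  rw [← center_conj x] at h2 h4
  rw [chi_neg, ← det_conj_mat g x] at hchi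
  set y := x * g * x⁻¹ with hy
  have e2 : x * (g * g) * x⁻¹ = y * y := by rw [hy]; group
  have e4 : x * ((g * g) * (g * g)) * x⁻¹ = (y * y) * (y * y) := by rw [hy]; group
  rw [e2] at h2
  rw [e4] at h4
  rw [mem_center_mat] at h2 h4
  simp only [mat_mul_apply] at h2 h4
  have hd := det_mat_ne y
  rw [Matrix.det_fin_two] at hchi
  rcases hx with ⟨a, b⟩ | ⟨a, b⟩
  · simp only [a, b, mul_zero, zero_mul, add_zero, zero_add, true_and] at h2 h4
    rw [a, zero_mul, sub_zero] at hchi hd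
    exact num4 hℓ _ _ (right_ne_zero_of_mul hd) h2 h4 hchi
  · exfalso
    apply h2
    rw [a, b]
    refine ⟨by ring, by ring, by ring⟩

lemma elt3 (g : GL2 ℓ) (hloc : ∃ x : GL2 ℓ, InNsp (x * g * x⁻¹))
    (h1 : g ∉ Subgroup.center (GL2 ℓ)) (h3 : g * g * g ∈ Subgroup.center (GL2 ℓ)) : ℓ % 3 = 1 := by
  obtain ⟨x, hx⟩ := hloc
  rw [← center_conj x] at h1 h3
  set y := x * g * x⁻¹ with hy
  have e3 : x * (g * g * g) * x⁻¹ = y * y * y := by rw [hy]; group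
  rw [e3] at h3
  rw [mem_center_mat] at h1 h3
  simp only [mat_mul_apply] at h3
  have hd := det_mat_ne y
  rcases hx with ⟨a, b⟩ | ⟨a, b⟩
  · simp only [a, b, mul_zero, zero_mul, add_zero, zero_add, true_and] at h1 h3
    rw [a, zero_mul, sub_zero] at hd
    exact num3 _ _ (right_ne_zero_of_mul hd) h1 h3
  · exfalso
    have h5 := h3.1
    rw [a, b] at h5
    rw [a, zero_mul, zero_sub] at hd
    have hbc := neg_ne_zero.1 hd
    have : mat y 0 1 * mat y 1 0 * mat y 0 1 = 0 := by linear_combination h5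
    exact mul_ne_zero hbc (left_ne_zero_of_mul hbc) this

lemma toPGL_eq_one (g : GL2 ℓ) : toPGL ℓ g = 1 ↔ g ∈ Subgroup.center (GL2 ℓ) :=
  QuotientGroup.eq_one_iff g

noncomputable def rhoBar (ℓ : ℕ) [Fact ℓ.Prime] : PGL2 ℓ →* Equiv.Perm (OnePoint (LL ℓ)) :=
  QuotientGroup.lift _ (rho ℓ) rho_center

noncomputable def chiBar (ℓ : ℕ) [Fact ℓ.Prime] : PGL2 ℓ →* ℤˣ :=
  QuotientGroup.lift _ (chi ℓ) chi_center

lemma rhoBar_toPGL (g : GL2 ℓ) : rhoBar ℓ (toPGL ℓ g) = rho ℓ g := rfl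

lemma chiBar_toPGL (g : GL2 ℓ) : chiBar ℓ (toPGL ℓ g) = chi ℓ g := rfl

lemma s4_case (hℓ : ℓ ≠ 2) (G : Subgroup (GL2 ℓ))
    (hloc : ∀ g ∈ G, ∃ x : GL2 ℓ, InNsp (x * g * x⁻¹))
    (hχ : Function.Surjective ((chiBar ℓ).comp (projImage G).subtype))
    (e : projImage G ≃* Equiv.Perm (Fin 4)) : ℓ % 24 = 13 := by
  have hsign := Equiv.Perm.eq_sign_of_surjective_hom
    (s := ((chiBar ℓ).comp (projImage G).subtype).comp e.symm.toMonoidHom)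
    (hχ.comp e.symm.surjective)
  have hlift : ∀ σ : Equiv.Perm (Fin 4), ∃ g ∈ G, ((e.symm σ : projImage G) : PGL2 ℓ) = toPGL ℓ g := by
    intro σ
    obtain ⟨g, hg, h⟩ := (e.symm σ).2
    exact ⟨g, hg, h.symm⟩
  have hone : ∀ σ : Equiv.Perm (Fin 4), ((e.symm σ : projImage G) : PGL2 ℓ) = 1 ↔ σ = 1 := by
    intro σ
    rw [OneMemClass.coe_eq_one, EmbeddingLike.map_eq_one_iff]
  have h8 : ℓ % 8 = 5 := by
    obtain ⟨g, hg, h⟩ := hlift (finRotate 4)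
    refine elt4 hℓ g (hloc g hg) ?_ ?_ ?_
    · rw [← toPGL_eq_one, map_mul, ← h, ← Subgroup.coe_mul, ← map_mul, hone]
      decide
    · rw [← toPGL_eq_one, map_mul, map_mul, ← h, ← Subgroup.coe_mul, ← Subgroup.coe_mul, ← map_mul,
        ← map_mul, hone]
      decide
    · rw [← chiBar_toPGL, ← h]
      have := congrArg (fun f : Equiv.Perm (Fin 4) →* ℤˣ => f (finRotate 4)) hsign
      refine this.trans ?_
      decide
  have h3 : ℓ % 3 = 1 := by
    obtain ⟨g, hg, h⟩ := hlift (Equiv.swap 0 1 * Equiv.swap 1 2)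
    refine elt3 g (hloc g hg) ?_ ?_
    · rw [← toPGL_eq_one, ← h, hone]
      decide
    · rw [← toPGL_eq_one, map_mul, map_mul, ← h, ← Subgroup.coe_mul, ← Subgroup.coe_mul, ← map_mul,
        ← map_mul, hone]
      decide
  omega

lemma main_dichotomy (hℓ : ℓ ≠ 2) (G : Subgroup (GL2 ℓ))
    (hloc : ∀ g ∈ G, ∃ x : GL2 ℓ, InNsp (x * g * x⁻¹))
    (hχ : Function.Surjective ((chiBar ℓ).comp (projImage G).subtype)) :
    (∃ P Q : OnePoint (LL ℓ), P ≠ Q ∧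
      ∀ g ∈ G, (rho ℓ g P = P ∧ rho ℓ g Q = Q) ∨ (rho ℓ g P = Q ∧ rho ℓ g Q = P)) ∨
    Nonempty (projImage G ≃* Equiv.Perm (Fin 4)) := by
  classical
  haveI : Finite (LL ℓ) := inferInstance
  haveI : Finite (OnePoint (LL ℓ)) := inferInstanceAs (Finite (Option (LL ℓ)))
  letI : Fintype (OnePoint (LL ℓ)) := Fintype.ofFinite _
  haveI : Finite (PGL2 ℓ) := Quotient.finite _
  letI : Fintype (projImage G) := Fintype.ofFinite _
  letI act : MulAction (projImage G) (OnePoint (LL ℓ)) :=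
    MulAction.compHom (OnePoint (LL ℓ)) ((rhoBar ℓ).comp (projImage G).subtype)
  have hsmul : ∀ (h : projImage G) (p : OnePoint (LL ℓ)), h • p = rhoBar ℓ (h : PGL2 ℓ) p :=
    fun _ _ => rfl
  have hmain := abstract_main (H := projImage G) (X := OnePoint (LL ℓ)) ?_ _ hχ
  · rcases hmain with ⟨P, Q, hPQ, h⟩ | h
    · left
      refine ⟨P, Q, hPQ, fun g hg => ?_⟩
      have := h ⟨toPGL ℓ g, g, hg, rfl⟩
      simp only [hsmul] at this
      exact this
    · exact Or.inr h
  · rintro ⟨_, g, hg, rfl⟩ hne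
    have hgc : g ∉ Subgroup.center (GL2 ℓ) := by
      intro h
      apply hne
      rw [← toPGL_eq_one] at h
      exact Subtype.ext h
    obtain ⟨x, hx⟩ := hloc g hg
    obtain ⟨P, Q, hPQ, h⟩ := fix_two hℓ g x hx hgc
    refine Eq.trans ?_ (Finset.card_pair hPQ)
    congr 1
    ext p
    rw [Finset.mem_filter, Finset.mem_insert, Finset.mem_singleton, ← h p]
    exact ⟨fun h => h.2, fun h => ⟨Finset.mem_univ _, h⟩⟩

end Final

/-- If every element of `G ≤ GL₂(F_ℓ)` lies in a conjugate of `N_sp`, some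
element is not diagonalizable, and the determinant map `G → F_ℓˣ` is surjective, then
`G` is in a conjugate of `N_sp`, or its projective image is `S₄` and `ℓ ≡ 13 (mod 24)`. -/
theorem local_global_normalizer_split_cartan_surjective_det
    {ℓ : ℕ} [Fact ℓ.Prime] (hℓ : ℓ ≠ 2)
    (G : Subgroup (GL2 ℓ))
    (hloc : ∀ g ∈ G, ∃ x : GL2 ℓ, InNsp (x * g * x⁻¹))
    (hnd : ∃ g ∈ G, ¬ ∃ x : GL2 ℓ, IsDiag (x * g * x⁻¹))
    (hdet : ∀ u : (ZMod ℓ)ˣ, ∃ g ∈ G, Matrix.GeneralLinearGroup.det g = u) :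
    (∃ x : GL2 ℓ, ∀ g ∈ G, InNsp (x * g * x⁻¹)) ∨
    (IsS4 (projImage G) ∧ ℓ % 24 = 13) := by
  have hχ : Function.Surjective ((chiBar ℓ).comp (projImage G).subtype) := by
    intro u
    rcases Int.units_eq_one_or u with rfl | rfl
    · exact ⟨1, map_one _⟩
    · obtain ⟨g, hg, h⟩ := exists_chi_neg hℓ G hdet
      exact ⟨⟨toPGL ℓ g, g, hg, rfl⟩, h⟩
  rcases main_dichotomy hℓ G hloc hχ with ⟨P, Q, hPQ, h⟩ | ⟨⟨e⟩⟩
  · exact Or.inl (invpair_case hℓ G hloc hdet P Q hPQ h)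
  · exact Or.inr ⟨⟨e⟩, s4_case hℓ G hloc hχ e⟩
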